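/- Let k ≥ 2, λ ⊢ kp, and set ε_1(λ) := Σ_{μ ⊢ p} (1/z_μ) · χ^λ_{kμ}. Then ε_1(λ) ≠ 0 if and only if λ has at most k nonzero parts, λ_1 ≥ … ≥ λ_k ≥ 0, and the k numbers λ_i + k − i (1 ≤ i ≤ k) have k pairwise distinct residues modulo k. In that case, ε_1(λ) equals the sign of the unique permutation τ ∈ S_k satisfying λ_{τ(i)} + k − τ(i) ≡ k − i (mod k) for all 1 ≤ i ≤ k. -/

import Mathlib

open scoped BigOperators

namespace RimHookPaper

/-- A partition: a weakly decreasing, eventually-zero sequence of naturals;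
`parts n` is the `(n+1)`-st part. -/
structure Partition : Type where
  parts : ℕ → ℕ
  antitone : ∀ ⦃i j : ℕ⦄, i ≤ j → parts j ≤ parts i
  eventually_zero : ∃ N : ℕ, ∀ i : ℕ, N ≤ i → parts i = 0

namespace Partition

/-- The size `|λ|` of a partition. -/
noncomputable def size (P : Partition) : ℕ := ∑ᶠ i, P.parts i

/-- The empty partition. -/
def empty : Partition := ⟨fun _ => 0, fun _ _ _ => le_rfl, ⟨0, fun _ _ => rfl⟩⟩

/-- The number of nonzero parts of a partition. -/
noncomputable def length (P : Partition) : ℕ := sInf {N | P.parts N = 0}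

/-- The cells of the Young diagram of a partition. -/
def cells (P : Partition) : Set (ℕ × ℕ) := {c | c.2 < P.parts c.1}

instance : LE Partition := ⟨fun Q P => ∀ i, Q.parts i ≤ P.parts i⟩

/-- The skew shape `P / Q` (as a set of cells). -/
def skew (P Q : Partition) : Set (ℕ × ℕ) := P.cells \ Q.cells

end Partition

/-- Edge-adjacency of cells. -/
def Adj (c d : ℕ × ℕ) : Prop :=
  (c.1 = d.1 ∧ (c.2 + 1 = d.2 ∨ d.2 + 1 = c.2)) ∨
    (c.2 = d.2 ∧ (c.1 + 1 = d.1 ∨ d.1 + 1 = c.1))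

/-- A set of cells is (edge-)connected. -/
def IsConnectedSet (S : Set (ℕ × ℕ)) : Prop :=
  ∀ c ∈ S, ∀ d ∈ S, Relation.ReflTransGen (fun x y => x ∈ S ∧ y ∈ S ∧ Adj x y) c d

/-- `S` contains no 2×2 square. -/
def NoSquare (S : Set (ℕ × ℕ)) : Prop :=
  ¬ ∃ i j : ℕ, (i, j) ∈ S ∧ (i + 1, j) ∈ S ∧ (i, j + 1) ∈ S ∧ (i + 1, j + 1) ∈ S

/-- `P / Q` is a rim hook (border strip) of length `t`: a nonempty connected skew
shape with no 2×2 square, consisting of `t` boxes. -/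
def IsRimHook (P Q : Partition) (t : ℕ) : Prop :=
  Q ≤ P ∧ (P.skew Q).Nonempty ∧ IsConnectedSet (P.skew Q) ∧ NoSquare (P.skew Q) ∧
    (P.skew Q).ncard = t

/-- One step of a rim hook tableau: an empty hook (`t = 0`) or a rim hook of length `t`. -/
def IsStep (P Q : Partition) (t : ℕ) : Prop :=
  (t = 0 ∧ P = Q) ∨ (0 < t ∧ IsRimHook P Q t)

/-- Number of rows met by a set of cells. -/
noncomputable def rowCount (S : Set (ℕ × ℕ)) : ℕ := (Prod.fst '' S).ncard

/-- A rim hook tableau of shape `P` and type `μ`: a chain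
`∅ = λ⁰ ⊆ λ¹ ⊆ ⋯ ⊆ λʳ = P` with each `λⁱ/λⁱ⁻¹` a (possibly empty)
rim hook of length `μᵢ`. -/
structure RHT (P : Partition) (μ : List ℕ) : Type where
  chain : Fin (μ.length + 1) → Partition
  chain_zero : chain 0 = Partition.empty
  chain_last : chain (Fin.last μ.length) = P
  step : ∀ j : Fin μ.length, IsStep (chain j.succ) (chain j.castSucc) (μ.get j)

/-- The total height of a rim hook tableau: the sum of the heights
(number of rows minus one) of its nonempty rim hooks. -/
noncomputable def RHT.height {P : Partition} {μ : List ℕ} (T : RHT P μ) : ℕ :=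
  ∑ j : Fin μ.length, (rowCount ((T.chain j.succ).skew (T.chain j.castSucc)) - 1)

/-- The character value `χ^λ_μ` of the symmetric group, via the
Murnaghan–Nakayama rule. -/
noncomputable def chiAux (P : Partition) (μ : List ℕ) : ℤ :=
  ∑ᶠ T : RHT P μ, (-1 : ℤ) ^ T.height

/-- The parts of a multiset, listed in weakly decreasing order. -/
def typeList (μ : Multiset ℕ) : List ℕ := (μ.sort (· ≤ ·)).reverse

/-- `χ^λ_μ` for a multiset type `μ`. -/
noncomputable def chi (P : Partition) (μ : Multiset ℕ) : ℤ := chiAux P (typeList μ)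

/-- `z_μ = ∏_j m_j! · j^{m_j}` where `μ` has `m_j` parts equal to `j`. -/
def zpart (μ : Multiset ℕ) : ℕ := μ.prod * ∏ j ∈ μ.toFinset, (μ.count j).factorial

/-- `χ^λ(σ)`: the character evaluated at a permutation, via its full cycle type
(including fixed points as parts equal to 1). -/
noncomputable def chiPerm (P : Partition) {m : ℕ} (σ : Equiv.Perm (Fin m)) : ℤ :=
  chi P (σ.cycleType + Multiset.replicate (m - σ.cycleType.sum) 1)

/-- Position of the zero (up step) corresponding to row `n` in the 0/1 sequence
`s(P)`, where the median of `s(P)` is the gap just below position `0`. -/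
def zpos (P : Partition) (n : ℕ) : ℤ := (P.parts n : ℤ) - (n : ℤ) - 1

/-- `s(P)` has a `0` (an up step) at position `x`; otherwise it has a `1`. -/
def isZeroAt (P : Partition) (x : ℤ) : Prop := ∃ n : ℕ, zpos P n = x

/-- `Q` is the `k`-quotient of `P`: for each residue `i`, the 0/1 sequence of `Q i`
is (up to the shift `d` recording the position of its median) the subsequence of
`s(P)` consisting of every `k`-th digit, including the `(i+1)`-st digit after the
median of `s(P)`. -/
def IsKQuotient (k : ℕ) (P : Partition) (Q : Fin k → Partition) : Prop :=
  ∀ i : Fin k, ∃ d : ℤ, ∀ j : ℤ,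
    isZeroAt (Q i) j ↔ isZeroAt P (((i : ℕ) : ℤ) + (j + d) * (k : ℤ))

/-- `C` is the `k`-core of `P`: it is obtained from `P` by successively removing
rim hooks of length `k`, as long as possible. -/
def IsKCore (k : ℕ) (P C : Partition) : Prop :=
  Relation.ReflTransGen (fun A B => IsRimHook A B k) P C ∧ ¬ ∃ C', IsRimHook C C' k

/-- The map on row indices induced by moving the zero in row `m` down (left)
to row `m'`, the zeros in rows `m+1,…,m'` each moving up one row. -/
def cycleFun (m m' n : ℕ) : ℕ :=
  if n = m then m' else if m < n ∧ n ≤ m' then n - 1 else n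

/-- One tracking step for the zero permutation: passing from `A` to `B` by removing
a rim hook, encoded on the 0/1 sequence as interchanging a `1` with a later `0`
(the moved zero, in row `m` of `A`, jumps over `m' - m` zeros, landing in row `m'`
of `B`); the row of each labeled zero is updated by `cycleFun m m'`. -/
def StepTrack (A B : Partition) (f g : ℕ → ℕ) : Prop :=
  (A = B ∧ g = f) ∨
    ∃ m m' : ℕ, m ≤ m' ∧
      (∀ n, n < m → zpos B n = zpos A n) ∧
      (∀ n, m ≤ n → n < m' → zpos B n = zpos A (n + 1)) ∧
      (∀ n, m' < n → zpos B n = zpos A n) ∧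
      g = fun i => cycleFun m m' (f i)

/-- `π` is the zero permutation of the rim hook tableau `T`: label the zeros of
`s(P)` succeeding the first one by `1,…,ℓ(P)` from left to right (`q j i` is the
row of label `i+1` at stage `j` of the peeling, rows counted from the top), peel
the rim hooks of `T` in order of decreasing entries, and read off the labels in
the final sequence `s(∅)` from left to right. -/
def IsZeroPerm {P : Partition} {μ : List ℕ} (T : RHT P μ)
    (π : Equiv.Perm (Fin P.length)) : Prop :=
  ∃ q : Fin (μ.length + 1) → ℕ → ℕ,
    (∀ i : ℕ, i < P.length → q (Fin.last μ.length) i = P.length - 1 - i) ∧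
    (∀ j : Fin μ.length,
      StepTrack (T.chain j.succ) (T.chain j.castSucc) (q j.succ) (q j.castSucc)) ∧
    (∀ i : Fin P.length, q 0 ((π i : ℕ)) = P.length - 1 - (i : ℕ))

/-- `ω(T) = (T₁,…,T_k)`: the rim hook tableau `T` (all of whose hook lengths are
divisible by `k`) decomposes into the `k`-tuple of rim hook tableaux `Ti` on the
`k`-quotient: each step of `T`, removing a hook of length `k·t`, affects exactly
one subsequence (mod `k`) of the 0/1 sequence, i.e. removes a hook of length `t`
from exactly one of the quotient partitions. -/
def OmegaRel (k : ℕ) {P : Partition} {κ : List ℕ} (T : RHT P κ)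
    {Q : Fin k → Partition} {ν : Fin k → List ℕ}
    (Ti : ∀ i : Fin k, RHT (Q i) (ν i)) : Prop :=
  ∃ (QC : Fin (κ.length + 1) → Fin k → Partition) (a : Fin κ.length → Fin k),
    (∀ j, IsKQuotient k (T.chain j) (QC j)) ∧
    (∀ j : Fin κ.length, ∀ i, i ≠ a j → QC j.castSucc i = QC j.succ i) ∧
    (∀ j : Fin κ.length, ∃ t : ℕ, κ.get j = k * t ∧
      IsStep (QC j.succ (a j)) (QC j.castSucc (a j)) t) ∧
    (∀ i : Fin k, ∃ e : Fin (ν i).length → Fin κ.length,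
      StrictMono e ∧ (∀ s, a (e s) = i) ∧ (∀ j, a j = i → ∃ s, e s = j) ∧
      (∀ s, k * (ν i).get s = κ.get (e s)) ∧
      (Ti i).chain 0 = QC 0 i ∧
      (∀ s : Fin (ν i).length, (Ti i).chain s.succ = QC (Fin.succ (e s)) i))


/-! ### Part 1 -/

def Bead (P Q : Partition) (t i m : ℕ) : Prop :=
  i ≤ m ∧ (∀ r, r < i → Q.parts r = P.parts r) ∧
  (∀ r, i ≤ r → r < m → Q.parts r + 1 = P.parts (r + 1)) ∧
  (∀ r, m < r → Q.parts r = P.parts r) ∧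
  Q.parts m + t + i = P.parts i + m ∧ Q.parts m < P.parts m

theorem Partition.ext' {P Q : Partition} (h : ∀ r, P.parts r = Q.parts r) : P = Q := by
  cases P; cases Q
  congr
  exact funext h

theorem Bead.unique {P Q Q' : Partition} {t i m m' : ℕ} (h : Bead P Q t i m)
    (h' : Bead P Q' t i m') : Q = Q' := by
  have key : ∀ {Q Q' : Partition} {m m' : ℕ}, Bead P Q t i m → Bead P Q' t i m' → ¬ m < m' := by
    intro Q Q' m m' h h' hlt
    obtain ⟨h1, h2, h3, h4, h5, h6⟩ := h
    obtain ⟨g1, g2, g3, g4, g5, g6⟩ := h'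
    have a1 := Q.antitone (Nat.le_succ m)
    have a2 := h4 (m+1) (by omega)
    have a3 := g3 m h1 hlt
    have a4 := Q'.antitone hlt.le
    simp only [Nat.succ_eq_add_one] at a1
    omega
  have e : m = m' := by
    have := key h h'
    have := key h' h
    omega
  subst e
  obtain ⟨h1, h2, h3, h4, h5, h6⟩ := h
  obtain ⟨g1, g2, g3, g4, g5, g6⟩ := h'
  apply Partition.ext'
  intro r
  rcases lt_or_ge r i with hr | hr
  · rw [h2 r hr, g2 r hr]
  rcases lt_trichotomy r m with hr' | hr' | hr'
  · have := h3 r hr hr'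
    have := g3 r hr hr'
    omega
  · subst hr'; omega
  · rw [h4 r hr', g4 r hr']

theorem Bead.row_lt {P Q : Partition} {t i m : ℕ} (h : Bead P Q t i m) {r : ℕ}
    (h1 : i ≤ r) (h2 : r ≤ m) : Q.parts r < P.parts r := by
  rcases h2.lt_or_eq with h3 | h3
  · have := h.2.2.1 r h1 h3
    have := P.antitone (Nat.le_succ r)
    simp only [Nat.succ_eq_add_one] at this
    omega
  · subst h3; exact h.2.2.2.2.2

theorem Bead.row_iff {P Q : Partition} {t i m : ℕ} (h : Bead P Q t i m) (r : ℕ) :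
    Q.parts r < P.parts r ↔ i ≤ r ∧ r ≤ m := by
  constructor
  · intro hr
    by_contra hc
    have : r < i ∨ m < r := by omega
    rcases this with h3 | h3
    · have := h.2.1 r h3; omega
    · have := h.2.2.2.1 r h3; omega
  · rintro ⟨a, b⟩; exact h.row_lt a b

theorem Bead.le {P Q : Partition} {t i m : ℕ} (h : Bead P Q t i m) (r : ℕ) :
    Q.parts r ≤ P.parts r := by
  by_cases hr : i ≤ r ∧ r ≤ m
  · exact (h.row_lt hr.1 hr.2).le
  · have : r < i ∨ m < r := by omega
    rcases this with h3 | h3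
    · exact (h.2.1 r h3).le
    · exact (h.2.2.2.1 r h3).le

theorem Bead.i_unique {P Q : Partition} {t i m i' m' : ℕ} (h : Bead P Q t i m)
    (h' : Bead P Q t i' m') : i = i' := by
  have a := (h.row_iff i).2 ⟨le_rfl, h.1⟩
  have b := (h'.row_iff i').2 ⟨le_rfl, h'.1⟩
  rw [h'.row_iff] at a
  rw [h.row_iff] at b
  omega

theorem mem_skew {P Q : Partition} {c : ℕ × ℕ} :
    c ∈ P.skew Q ↔ Q.parts c.1 ≤ c.2 ∧ c.2 < P.parts c.1 := by
  simp [Partition.skew, Partition.cells]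
  tauto

theorem row_image {P Q : Partition} : 
    Prod.fst '' (P.skew Q) = {r | Q.parts r < P.parts r} := by
  ext r
  constructor
  · rintro ⟨c, hc, rfl⟩
    rw [mem_skew] at hc
    simp only [Set.mem_ofPred_eq]; omega
  · intro hr
    exact ⟨(r, Q.parts r), mem_skew.2 ⟨le_rfl, hr⟩, rfl⟩

theorem skew_ncard {P Q : Partition} {i m : ℕ}
    (h : ∀ r, Q.parts r < P.parts r ↔ i ≤ r ∧ r ≤ m) :
    (P.skew Q).ncard = ∑ r ∈ Finset.Ico i (m+1), (P.parts r - Q.parts r) := by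
  have : P.skew Q = (((Finset.Ico i (m+1)).sigma (fun r => Finset.Ico (Q.parts r) (P.parts r))).map
      (Equiv.sigmaEquivProd ℕ ℕ).toEmbedding : Finset (ℕ × ℕ)) := by
    ext ⟨r, c⟩
    rw [mem_skew]
    simp only [Finset.coe_map, Set.mem_image, Finset.mem_coe, Finset.mem_sigma, Finset.mem_Ico]
    constructor
    · intro hc
      have := (h r).1 (hc.1.trans_lt hc.2)
      refine ⟨⟨r, c⟩, ⟨⟨this.1, by simp only; omega⟩, hc⟩, rfl⟩
    · rintro ⟨⟨r', c'⟩, h1, h2⟩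
      simp [Equiv.sigmaEquivProd] at h2
      obtain ⟨rfl, rfl⟩ := h2
      exact h1.2
  rw [this, Set.ncard_coe_finset, Finset.card_map, Finset.card_sigma]
  simp

theorem telescope (p q : ℕ → ℕ) (i m : ℕ) (him : i ≤ m) :
    (∀ r, i ≤ r → r < m → q r + 1 = p (r+1)) → (∀ r, q r ≤ p r) →
    ∑ r ∈ Finset.Ico i (m+1), (p r - q r) + q m + i = p i + m := by
  induction m, him using Nat.le_induction with
  | base => intro _ h; have := h i; simp; omega
  | succ m hm ih =>
    intro h1 h2
    have := ih (fun r hr hr' => h1 r hr (by omega)) h2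
    rw [Finset.sum_Ico_succ_top (by omega)]
    have a := h1 m hm (by omega)
    have b := h2 m
    have c := h2 (m+1)
    omega

theorem skew_conn_cross {S : Set (ℕ × ℕ)} (h : IsConnectedSet S) {c d : ℕ × ℕ} (hc : c ∈ S)
    (hd : d ∈ S) {r : ℕ} (hcr : c.1 ≤ r) (hdr : r < d.1) :
    ∃ j, (r, j) ∈ S ∧ (r + 1, j) ∈ S := by
  by_contra hcon
  push Not at hcon
  have := h c hc d hd
  have key : d.1 ≤ r := by
    clear hdr hd
    induction this with
    | refl => exact hcr
    | tail _ hs ih =>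
      obtain ⟨hx, hy, ha⟩ := hs
      rename_i x y _
      obtain ⟨x1, x2⟩ := x
      obtain ⟨y1, y2⟩ := y
      simp only [Adj] at ha ih ⊢
      by_contra hlt
      have e1 : x1 = r := by omega
      have e2 : y1 = r + 1 := by omega
      have e3 : x2 = y2 := by omega
      subst e1 e2 e3
      exact hcon _ hx hy
  omega

theorem exists_bead {P Q : Partition} {t : ℕ} (h : IsRimHook P Q t) : ∃ i m, Bead P Q t i m := by
  obtain ⟨hle, ⟨c0, hc0⟩, hconn, hsq, hcard⟩ := h
  have hle : ∀ r, Q.parts r ≤ P.parts r := hle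
  obtain ⟨N, hN⟩ := P.eventually_zero
  let R : ℕ → Prop := fun r => Q.parts r < P.parts r
  have hex : ∃ r, R r := ⟨c0.1, by rw [mem_skew] at hc0; simp only [R]; omega⟩
  have hRN : ∀ r, R r → r ≤ N := by
    intro r hr
    by_contra hlt
    have := hN r (by omega)
    simp only [R] at hr; omega
  classical
  let i := Nat.find hex
  have hi : R i := Nat.find_spec hex
  have hi' : ∀ r, R r → i ≤ r := fun r hr => Nat.find_min' hex hr
  let m := Nat.findGreatest R N
  have hm : R m := Nat.findGreatest_spec (hRN i hi) hi
  have hm' : ∀ r, R r → r ≤ m := fun r hr => Nat.le_findGreatest (hRN r hr) hr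
  have him : i ≤ m := hi' m hm
  have hstep : ∀ r, i ≤ r → r < m → Q.parts r + 1 = P.parts (r+1) := by
    intro r h1 h2
    obtain ⟨j, ha, hb⟩ := skew_conn_cross hconn (c := (i, Q.parts i)) (d := (m, Q.parts m))
      (mem_skew.2 ⟨le_rfl, hi⟩) (mem_skew.2 ⟨le_rfl, hm⟩) h1 h2
    rw [mem_skew] at ha hb
    simp only at ha hb
    have hq := Q.antitone (Nat.le_succ r)
    have hp := P.antitone (Nat.le_succ r)
    simp only [Nat.succ_eq_add_one] at hq hp
    by_contra hne
    apply hsq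
    refine ⟨r, Q.parts r, ?_, ?_, ?_, ?_⟩ <;> rw [mem_skew] <;> simp only <;> omega
  have hrow : ∀ r, Q.parts r < P.parts r ↔ i ≤ r ∧ r ≤ m := by
    intro r
    constructor
    · intro hr; exact ⟨hi' r hr, hm' r hr⟩
    · rintro ⟨h1, h2⟩
      rcases h2.lt_or_eq with h3 | h3
      · have := hstep r h1 h3
        have hp := P.antitone (Nat.le_succ r)
        simp only [Nat.succ_eq_add_one] at hp
        omega
      · rw [h3]; exact hm
  refine ⟨i, m, him, ?_, hstep, ?_, ?_, hm⟩
  · intro r hr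
    have := hle r
    have := hrow r
    omega
  · intro r hr
    have := hle r
    have := hrow r
    omega
  · have := telescope P.parts Q.parts i m him hstep hle
    rw [skew_ncard hrow] at hcard
    omega

theorem Bead.isRimHook {P Q : Partition} {t i m : ℕ} (h : Bead P Q t i m) : IsRimHook P Q t := by
  refine ⟨h.le, ⟨(m, Q.parts m), mem_skew.2 ⟨le_rfl, h.2.2.2.2.2⟩⟩, ?_, ?_, ?_⟩
  · have hsym : ∀ c d, Relation.ReflTransGen
        (fun x y => x ∈ P.skew Q ∧ y ∈ P.skew Q ∧ Adj x y) c d →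
        Relation.ReflTransGen (fun x y => x ∈ P.skew Q ∧ y ∈ P.skew Q ∧ Adj x y) d c := by
      intro c d hcd
      induction hcd with
      | refl => exact Relation.ReflTransGen.refl
      | tail _ hs ih =>
      obtain ⟨h1, h2, h3⟩ := hs
      refine Relation.ReflTransGen.head ⟨h2, h1, ?_⟩ ih
      simp only [Adj] at h3 ⊢
      omega
    have hrow : ∀ r j, (r, Q.parts r + j) ∈ P.skew Q → Relation.ReflTransGen
        (fun x y => x ∈ P.skew Q ∧ y ∈ P.skew Q ∧ Adj x y) (r, Q.parts r + j) (r, Q.parts r) := by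
      intro r j
      induction j with
      | zero => intro _; exact Relation.ReflTransGen.refl
      | succ j ih =>
        intro hj
        have hj' : (r, Q.parts r + j) ∈ P.skew Q := by
          rw [mem_skew] at hj ⊢
          simp only at hj ⊢; omega
        refine Relation.ReflTransGen.head ⟨hj, hj', ?_⟩ (ih hj')
        exact Or.inl ⟨rfl, Or.inr rfl⟩
    have hcol : ∀ s r, i ≤ r → r + s = m → Relation.ReflTransGen
        (fun x y => x ∈ P.skew Q ∧ y ∈ P.skew Q ∧ Adj x y) (r, Q.parts r) (m, Q.parts m) := by
      intro s
      induction s with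
      | zero => intro r _ hr; simp at hr; subst hr; exact Relation.ReflTransGen.refl
      | succ s ih =>
        intro r h1 h2
        have a := h.2.2.1 r h1 (by omega)
        have hq := Q.antitone (Nat.le_succ r)
        simp only [Nat.succ_eq_add_one] at hq
        have hmem : (r + 1, Q.parts r) ∈ P.skew Q := mem_skew.2 ⟨hq, by simp only; omega⟩
        refine Relation.ReflTransGen.head (b := (r+1, Q.parts r))
          ⟨mem_skew.2 ⟨le_rfl, h.row_lt h1 (by omega)⟩, hmem, ?_⟩ ?_
        · exact Or.inr ⟨rfl, Or.inl rfl⟩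
        · refine Relation.ReflTransGen.trans ?_ (ih (r+1) (by omega) (by omega))
          have := hrow (r+1) (Q.parts r - Q.parts (r+1))
          rw [show Q.parts (r+1) + (Q.parts r - Q.parts (r+1)) = Q.parts r by omega] at this
          exact this hmem
    have hall : ∀ c ∈ P.skew Q, Relation.ReflTransGen
        (fun x y => x ∈ P.skew Q ∧ y ∈ P.skew Q ∧ Adj x y) c (m, Q.parts m) := by
      rintro ⟨r, j⟩ hc
      have hc' := mem_skew.1 hc
      simp only at hc'
      have hr := (h.row_iff r).1 (by omega)
      have := hrow r (j - Q.parts r)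
      rw [show Q.parts r + (j - Q.parts r) = j by omega] at this
      exact (this hc).trans (hcol (m - r) r hr.1 (by omega))
    intro c hc d hd
    exact (hall c hc).trans (hsym _ _ (hall d hd))
  · rintro ⟨r, j, h1, h2, h3, h4⟩
    rw [mem_skew] at h1 h2 h3 h4
    simp only at h1 h2 h3 h4
    have a := (h.row_iff r).1 (by omega)
    have b := (h.row_iff (r+1)).1 (by omega)
    have := h.2.2.1 r a.1 (by omega)
    omega
  · rw [skew_ncard h.row_iff]
    have := telescope P.parts Q.parts i m h.1 h.2.2.1 h.le
    have := h.2.2.2.2.1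
    omega

theorem Bead.rowCount {P Q : Partition} {t i m : ℕ} (h : Bead P Q t i m) :
    rowCount (P.skew Q) - 1 = m - i := by
  have : {r | Q.parts r < P.parts r} = (Finset.Icc i m : Set ℕ) := by
    ext r
    simp [h.row_iff r]
  rw [RimHookPaper.rowCount, row_image, this, Set.ncard_coe_finset, Nat.card_Icc]
  omega

/-! ### Part 2 -/

theorem exists_bead_of_good {P : Partition} {n t i : ℕ} (hP : ∀ r, n ≤ r → P.parts r = 0)
    (hi : i < n) (ht : 0 < t) (h1 : t ≤ P.parts i + (n - 1 - i))
    (h2 : ∀ j, j < n → j ≠ i → P.parts j + (n - 1 - j) + t ≠ P.parts i + (n - 1 - i)) :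
    ∃ Q m, Bead P Q t i m := by
  classical
  let R : ℕ → Prop := fun j => i ≤ j ∧ (j = i ∨ P.parts i + j < P.parts j + i + t)
  let m := Nat.findGreatest R (n - 1)
  have hRi : R i := ⟨le_rfl, Or.inl rfl⟩
  have hm : R m := Nat.findGreatest_spec (m := i) (by omega) hRi
  have hmn : m ≤ n - 1 := Nat.findGreatest_le _
  have hmax : ∀ j, j < n → R j → j ≤ m := fun j hj hr => Nat.le_findGreatest (by omega) hr
  have him : i ≤ m := hm.1
  have hnext : m + 1 < n → P.parts (m+1) + i + t < P.parts i + (m + 1) := by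
    intro hlt
    have a := h2 (m+1) hlt (by omega)
    by_contra hc
    have := hmax (m+1) hlt ⟨by omega, Or.inr (by omega)⟩
    omega
  have hpos : i < m → 0 < P.parts m := by
    intro hlt
    have h3 : P.parts i + m < P.parts m + i + t := by
      rcases hm.2 with h | h
      · omega
      · exact h
    by_contra hc
    rcases Nat.lt_or_ge (m+1) n with h4 | h4
    · have := hnext h4
      have := P.antitone (Nat.le_succ m)
      simp only [Nat.succ_eq_add_one] at this
      omega
    · omega
  have hpos' : ∀ r, i ≤ r → r < m → 0 < P.parts (r + 1) := by
    intro r h3 h4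
    have := P.antitone (show r + 1 ≤ m by omega)
    have := hpos (by omega)
    omega
  have hge : t + i ≤ P.parts i + m := by
    rcases Nat.lt_or_ge (m+1) n with h4 | h4
    · have := hnext h4
      omega
    · omega
  have hlast : P.parts (m+1) + i + t ≤ P.parts i + m := by
    rcases Nat.lt_or_ge (m+1) n with h4 | h4
    · have := hnext h4
      omega
    · have := hP (m+1) h4
      omega
  have hm2 : i < m → P.parts i + m < P.parts m + i + t := by
    intro hlt
    rcases hm.2 with h | h
    · omega
    · exact h
  let q : ℕ → ℕ := fun r => if r < i then P.parts r else if r < m then P.parts (r+1) - 1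
    else if r = m then P.parts i + m - i - t else P.parts r
  have q1 : ∀ r, r < i → q r = P.parts r := fun r hr => by simp [q, hr]
  have q2 : ∀ r, i ≤ r → r < m → q r = P.parts (r+1) - 1 := fun r hr hr' => by
    simp [q, hr', Nat.not_lt.2 hr]
  have q3 : q m = P.parts i + m - i - t := by simp [q, Nat.not_lt.2 him]
  have q4 : ∀ r, m < r → q r = P.parts r := fun r hr => by
    have e1 : ¬ r < i := by omega
    have e2 : ¬ r < m := by omega
    have e3 : ¬ r = m := by omega
    simp [q, e1, e2, e3]
  have hanti : Antitone q := by
    apply antitone_nat_of_succ_le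
    intro r
    have hp := P.antitone (Nat.le_succ r)
    have hp2 := P.antitone (Nat.le_succ (r+1))
    simp only [Nat.succ_eq_add_one] at hp hp2
    rcases lt_trichotomy r m with h3 | h3 | h3
    · rcases Nat.lt_or_ge r i with h4 | h4
      · rw [q1 r h4]
        rcases Nat.lt_or_ge (r+1) i with h5 | h5
        · rw [q1 _ h5]; exact hp
        · have e : r + 1 = i := by omega
          rcases Nat.lt_or_ge (r+1) m with h6 | h6
          · rw [q2 _ h5 h6]; omega
          · have : r + 1 = m := by omega
            rw [this, q3]
            have := P.antitone (show r ≤ i by omega)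
            omega
      · rw [q2 r h4 h3]
        rcases Nat.lt_or_ge (r+1) m with h6 | h6
        · rw [q2 _ (by omega) h6]; omega
        · have e : r + 1 = m := by omega
          have := hm2 (by omega)
          rw [e, q3]
          omega
    · rw [h3, q4 _ (by omega), q3]
      omega
    · rw [q4 _ h3, q4 _ (by omega)]; exact hp
  refine ⟨⟨q, hanti, ⟨n, fun r hr => by rw [q4 r (by omega), hP r hr]⟩⟩, m, him, q1, ?_, q4, ?_, ?_⟩
  · intro r hr hr'
    have := hpos' r hr hr'
    change q r + 1 = _
    rw [q2 r hr hr']; omega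
  · change q m + t + i = _
    rw [q3]; omega
  · change q m < _
    rw [q3]
    rcases Nat.lt_or_ge i m with h | h
    · have := hm2 h; omega
    · have e : i = m := by omega
      rw [← e]; omega

/-- exponent vector -/
noncomputable def al (n : ℕ) (P : Partition) : Fin n →₀ ℕ :=
  Finsupp.equivFunOnFinite.symm fun i => P.parts i + (n - 1 - i)

@[simp] theorem al_apply (n : ℕ) (P : Partition) (i : Fin n) :
    al n P i = P.parts i + (n - 1 - i) := rfl

def Anti {n : ℕ} (F : (Fin n →₀ ℕ) → ℚ) : Prop :=
  ∀ (σ : Equiv.Perm (Fin n)) (γ γ' : Fin n →₀ ℕ), (∀ i, γ' i = γ (σ i)) →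
    F γ' = ((Equiv.Perm.sign σ : ℤ) : ℚ) * F γ

theorem Anti.eq_zero {n : ℕ} {F : (Fin n →₀ ℕ) → ℚ} (hF : Anti F) {γ : Fin n →₀ ℕ} {i j : Fin n}
    (hij : i ≠ j) (h : γ i = γ j) : F γ = 0 := by
  have := hF (Equiv.swap i j) γ γ (by
    intro l
    rcases eq_or_ne l i with rfl | h1
    · rw [Equiv.swap_apply_left, h]
    rcases eq_or_ne l j with rfl | h2
    · rw [Equiv.swap_apply_right, h]
    rw [Equiv.swap_apply_of_ne_of_ne h1 h2])
  rw [Equiv.Perm.sign_swap hij] at this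
  simp at this
  linarith

def Good (n : ℕ) (P : Partition) (t : ℕ) (i : Fin n) : Prop :=
  t ≤ al n P i ∧ ∀ j, j ≠ i → al n P j + t ≠ al n P i

theorem Good.exists_bead {n : ℕ} {P : Partition} {t : ℕ} (hP : ∀ r, n ≤ r → P.parts r = 0)
    (ht : 0 < t) {i : Fin n} (h : Good n P t i) : ∃ Q m, Bead P Q t i m := by
  apply exists_bead_of_good hP i.2 ht h.1
  intro j hj hne
  exact h.2 ⟨j, hj⟩ (fun e => hne (by rw [← e]))

theorem Bead.lt {P Q : Partition} {n t i m : ℕ} (hP : ∀ r, n ≤ r → P.parts r = 0)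
    (h : Bead P Q t i m) : m < n := by
  have := h.2.2.2.2.2
  by_contra hc
  have := hP m (by omega)
  omega

theorem Bead.good {P Q : Partition} {n t m : ℕ} {i : Fin n} (hP : ∀ r, n ≤ r → P.parts r = 0)
    (ht : 0 < t) (h : Bead P Q t i m) : Good n P t i := by
  have hm := h.lt hP
  have h5 := h.2.2.2.2.1
  have h6 := h.2.2.2.2.2
  have h1 := h.1
  refine ⟨by simp only [al_apply]; omega, ?_⟩
  intro j hj
  have hj' : (j : ℕ) ≠ i := fun e => hj (Fin.ext e)
  simp only [al_apply]
  have hjn := j.2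
  rcases lt_or_ge (j : ℕ) i with h2 | h2
  · have := P.antitone h2.le
    omega
  rcases le_or_gt (j : ℕ) m with h3 | h3
  · have a := P.antitone h3
    have b := h.2.2.1 (j - 1) (by omega) (by omega)
    rw [show (j:ℕ) - 1 + 1 = j by omega] at b
    have c := Q.antitone (show (j : ℕ) - 1 ≤ m by omega)
    omega
  · have a := h.2.2.2.1 j h3
    have b := Q.antitone h3.le
    omega

theorem Bead.value {P Q : Partition} {n t m : ℕ} {i : Fin n} (hP : ∀ r, n ≤ r → P.parts r = 0)
    (h : Bead P Q t i m) {F : (Fin n →₀ ℕ) → ℚ} (hF : Anti F) :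
    F (al n P - Finsupp.single i t) = (-1) ^ (m - i) * F (al n Q) := by
  have hm := h.lt hP
  have h1 := h.1
  have h5 := h.2.2.2.2.1
  have h6 := h.2.2.2.2.2
  have : NeZero n := ⟨by omega⟩
  have hle : i ≤ (⟨m, hm⟩ : Fin n) := h1
  have key := hF (Fin.cycleIcc i ⟨m, hm⟩) (al n P - Finsupp.single i t) (al n Q) (by
    intro r
    have hr := r.2
    rcases lt_or_ge r i with h2 | h2
    · rw [Fin.cycleIcc_of_lt h2]
      have := h.2.1 r h2
      rw [Finsupp.tsub_apply, Finsupp.single_eq_of_ne h2.ne]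
      simp [this]
    rcases lt_trichotomy (r : ℕ) m with h3 | h3 | h3
    · rw [Fin.cycleIcc_of_ge_of_lt h2 h3]
      have hv : ((r + 1 : Fin n) : ℕ) = r + 1 := Fin.val_add_one_of_lt' (by omega)
      have hne : r + 1 ≠ i := by
        intro e
        have := congrArg Fin.val e
        rw [hv] at this
        have : (i : ℕ) ≤ r := h2
        omega
      rw [Finsupp.tsub_apply, Finsupp.single_eq_of_ne hne]
      simp only [al_apply, hv]
      have := h.2.2.1 r h2 h3
      omega
    · have : r = ⟨m, hm⟩ := Fin.ext h3
      rw [this, Fin.cycleIcc_of_last hle]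
      simp
      omega
    · rw [Fin.cycleIcc_of_gt (show (⟨m, hm⟩ : Fin n) < r from h3)]
      have hne : r ≠ i := by
        intro e
        have := congrArg Fin.val e
        omega
      have := h.2.2.2.1 r h3
      rw [Finsupp.tsub_apply, Finsupp.single_eq_of_ne hne]
      simp [this])
  rw [Fin.sign_cycleIcc_of_le hle] at key
  rw [key]
  push_cast
  rw [← mul_assoc, ← mul_pow]
  simp

theorem Bead.isStep {P Q : Partition} {t i m : ℕ} (ht : 0 < t) (h : Bead P Q t i m) :
    IsStep P Q t := Or.inr ⟨ht, h.isRimHook⟩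

theorem exists_bead_of_isStep {P Q : Partition} {t : ℕ} (ht : 0 < t) (h : IsStep P Q t) :
    ∃ i m, Bead P Q t i m := by
  rcases h with h | h
  · omega
  · exact exists_bead h.2

theorem exists_equiv (n : ℕ) {P : Partition} {t : ℕ} (hP : ∀ r, n ≤ r → P.parts r = 0)
    (ht : 0 < t) : ∃ e : {i : Fin n // Good n P t i} ≃ {Q // IsStep P Q t},
      ∀ i, ∃ m, Bead P (e i).1 t i.1 m := by
  choose f hf using fun i : {i : Fin n // Good n P t i} => i.2.exists_bead hP ht
  choose g hg using hf
  refine ⟨Equiv.ofBijective (fun i => ⟨f i, (hg i).isStep ht⟩) ⟨?_, ?_⟩, fun i => ⟨g i, hg i⟩⟩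
  · intro i j hij
    have e : f i = f j := congrArg Subtype.val hij
    have a := hg i
    rw [e] at a
    exact Subtype.ext (Fin.ext (a.i_unique (hg j)))
  · rintro ⟨Q, hQ⟩
    obtain ⟨i, m, h⟩ := exists_bead_of_isStep ht hQ
    have him := h.1
    have hm := h.lt hP
    have h' : Bead P Q t ((⟨i, by omega⟩ : Fin n) : ℕ) m := h
    exact ⟨⟨⟨i, by omega⟩, h'.good hP ht⟩, Subtype.ext ((hg _).unique h')⟩

theorem finite_steps (P : Partition) {t : ℕ} (ht : 0 < t) : Finite {Q // IsStep P Q t} := by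
  obtain ⟨n, hn⟩ := P.eventually_zero
  obtain ⟨e, _⟩ := exists_equiv n hn ht
  exact Finite.of_equiv _ e

theorem step_sum (n : ℕ) {P : Partition} {t : ℕ} (hP : ∀ r, n ≤ r → P.parts r = 0)
    (ht : 0 < t) [Fintype {Q // IsStep P Q t}] {F : (Fin n →₀ ℕ) → ℚ} (hF : Anti F) :
    ∑ Q : {Q // IsStep P Q t}, (-1) ^ (rowCount (P.skew Q.1) - 1) * F (al n Q.1) =
    ∑ i : Fin n, if t ≤ al n P i then F (al n P - Finsupp.single i t) else 0 := by
  classical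
  obtain ⟨e, he⟩ := exists_equiv n hP ht
  rw [← e.sum_comp]
  have : ∀ i : {i : Fin n // Good n P t i},
      (-1) ^ (rowCount (P.skew (e i).1) - 1) * F (al n (e i).1) =
        if t ≤ al n P i.1 then F (al n P - Finsupp.single i.1 t) else 0 := by
    intro i
    obtain ⟨m, hm⟩ := he i
    rw [if_pos i.2.1, hm.value hP hF, hm.rowCount]
  rw [Finset.sum_congr rfl (fun i _ => this i)]
  rw [← Finset.sum_subtype (Finset.univ.filter (Good n P t)) (by simp)
    (fun i => if t ≤ al n P i then F (al n P - Finsupp.single i t) else 0)]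
  apply Finset.sum_subset (Finset.filter_subset _ _)
  intro i _ hi
  split_ifs with hti
  · simp only [Finset.mem_filter, Finset.mem_univ, true_and, Good, not_and, not_forall] at hi
    obtain ⟨j, hj, h⟩ := hi hti
    apply hF.eq_zero hj
    rw [Finsupp.tsub_apply, Finsupp.tsub_apply, Finsupp.single_eq_of_ne hj, Finsupp.single_eq_same]
    push Not at h
    omega
  · rfl

/-- chains -/
def Chain (l : ℕ) (ν : Fin l → ℕ) (P : Partition) : Type :=
  {c : Fin (l + 1) → Partition // c 0 = Partition.empty ∧ c (Fin.last l) = P ∧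
    ∀ j : Fin l, IsStep (c j.succ) (c j.castSucc) (ν j)}

noncomputable def Chain.height {l : ℕ} {ν : Fin l → ℕ} {P : Partition} (c : Chain l ν P) : ℕ :=
  ∑ j : Fin l, (rowCount ((c.1 j.succ).skew (c.1 j.castSucc)) - 1)

theorem chain_sig_ext {l : ℕ} {ν : Fin l → ℕ} {C : Partition → Prop}
    (x y : Σ Q : {Q // C Q}, Chain l ν Q.1) (h : x.2.1 = y.2.1) : x = y := by
  obtain ⟨⟨Q, hQ⟩, ⟨c, h1, h2, h3⟩⟩ := x
  obtain ⟨⟨Q', hQ'⟩, ⟨c', h1', h2', h3'⟩⟩ := y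
  simp only at h h2 h2'
  subst h
  have : Q = Q' := h2.symm.trans h2'
  subst this
  rfl

def chainEquiv (l : ℕ) (ν : Fin (l + 1) → ℕ) (P : Partition) :
    Chain (l + 1) ν P ≃ Σ Q : {Q // IsStep P Q (ν (Fin.last l))},
      Chain l (fun j => ν j.castSucc) Q.1 where
  toFun c := ⟨⟨c.1 (Fin.last l).castSucc, by
      have h1 := c.2.2.2 (Fin.last l)
      have h2 := c.2.2.1
      rw [Fin.succ_last, h2] at h1
      exact h1⟩, ⟨fun j => c.1 j.castSucc, c.2.1, rfl, fun j => c.2.2.2 j.castSucc⟩⟩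
  invFun x := ⟨Fin.snoc (α := fun _ => Partition) x.2.1 P, by
      have : (0 : Fin (l + 2)) = (0 : Fin (l+1)).castSucc := rfl
      rw [this, Fin.snoc_castSucc]; exact x.2.2.1, by simp, by
      intro j
      refine Fin.lastCases ?_ (fun j => ?_) j
      · rw [Fin.succ_last, Fin.snoc_last, Fin.snoc_castSucc, x.2.2.2.1]
        exact x.1.2
      · rw [Fin.succ_castSucc, Fin.snoc_castSucc, Fin.snoc_castSucc]
        exact x.2.2.2.2 j⟩
  left_inv c := by
    apply Subtype.ext
    funext j
    refine Fin.lastCases ?_ (fun j => ?_) j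
    · simp [c.2.2.1]
    · simp
  right_inv x := by
    apply chain_sig_ext
    funext j
    simp

theorem chainEquiv_height (l : ℕ) (ν : Fin (l + 1) → ℕ) (P : Partition) (c : Chain (l + 1) ν P) :
    c.height = (chainEquiv l ν P c).2.height +
      (rowCount (P.skew (chainEquiv l ν P c).1.1) - 1) := by
  have h2 := c.2.2.1
  rw [Chain.height, Fin.sum_univ_castSucc, Fin.succ_last, h2]
  rfl

theorem finite_chain (l : ℕ) : ∀ (ν : Fin l → ℕ) (_ : ∀ j, 0 < ν j) (P : Partition),
    Finite (Chain l ν P) := by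
  induction l with
  | zero =>
    intro ν _ P
    have : Subsingleton (Chain 0 ν P) := ⟨fun a b => Subtype.ext (funext fun j => by
      rw [Fin.fin_one_eq_zero j, a.2.1, b.2.1])⟩
    infer_instance
  | succ l ih =>
    intro ν hν P
    have := finite_steps P (hν (Fin.last l))
    have := fun Q => ih (fun j => ν j.castSucc) (fun j => hν _) Q
    exact Finite.of_equiv _ (chainEquiv l ν P).symm

noncomputable def chiF (l : ℕ) (ν : Fin l → ℕ) (P : Partition) : ℚ :=
  ∑ᶠ c : Chain l ν P, (-1 : ℚ) ^ c.height

theorem chiF_succ (l : ℕ) (ν : Fin (l + 1) → ℕ) (hν : ∀ j, 0 < ν j) (P : Partition)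
    [Fintype {Q // IsStep P Q (ν (Fin.last l))}] :
    chiF (l + 1) ν P = ∑ Q : {Q // IsStep P Q (ν (Fin.last l))},
      (-1) ^ (rowCount (P.skew Q.1) - 1) * chiF l (fun j => ν j.castSucc) Q.1 := by
  have := finite_chain (l+1) ν hν P
  have hfin : ∀ Q, Finite (Chain l (fun j => ν j.castSucc) Q) :=
    fun Q => finite_chain l (fun j => ν j.castSucc) (fun j => hν _) Q
  have := Fintype.ofFinite (Chain (l+1) ν P)
  have := fun Q => Fintype.ofFinite (Chain l (fun j => ν j.castSucc) Q)
  simp only [chiF]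
  simp only [finsum_eq_sum_of_fintype, Finset.mul_sum]
  rw [← Fintype.sum_sigma (fun x : (Σ Q : {Q // IsStep P Q (ν (Fin.last l))},
      Chain l (fun j => ν j.castSucc) Q.1) => (-1 : ℚ) ^ (rowCount (P.skew x.1.1) - 1)
        * (-1) ^ x.2.height)]
  refine Fintype.sum_equiv (chainEquiv l ν P) _ _ ?_
  intro c
  rw [chainEquiv_height, pow_add, mul_comm]

theorem chiAux_eq (P : Partition) (μ : List ℕ) : (chiAux P μ : ℚ) = chiF μ.length μ.get P := by
  let e : RHT P μ ≃ Chain μ.length μ.get P :=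
    { toFun := fun T => ⟨T.chain, T.chain_zero, T.chain_last, T.step⟩
      invFun := fun c => ⟨c.1, c.2.1, c.2.2.1, c.2.2.2⟩
      left_inv := fun T => rfl
      right_inv := fun c => rfl }
  have := (Int.castAddHom ℚ).map_finsum_of_injective Int.cast_injective
    (fun T : RHT P μ => (-1 : ℤ) ^ T.height)
  rw [chiAux, chiF]
  refine Eq.trans this ?_
  refine finsum_eq_of_bijective e e.bijective ?_
  intro T
  simp
  rfl

/-! ### Part 3 -/

open MvPolynomial in
theorem coeff_mul_psum {n : ℕ} (f : MvPolynomial (Fin n) ℚ) (t : ℕ) (γ : Fin n →₀ ℕ) :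
    coeff γ (f * psum (Fin n) ℚ t) =
      ∑ i : Fin n, if t ≤ γ i then coeff (γ - Finsupp.single i t) f else 0 := by
  rw [psum, Finset.mul_sum, coeff_sum]
  refine Finset.sum_congr rfl fun i _ => ?_
  rw [X_pow_eq_monomial, coeff_mul_monomial']
  simp only [Finsupp.single_le_iff, mul_one]

noncomputable def dl (n : ℕ) (π : Equiv.Perm (Fin n)) : Fin n →₀ ℕ :=
  Finsupp.equivFunOnFinite.symm fun i => n - 1 - (π i : ℕ)

@[simp] theorem dl_apply (n : ℕ) (π : Equiv.Perm (Fin n)) (i : Fin n) :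
    dl n π i = n - 1 - (π i : ℕ) := rfl

open MvPolynomial in
noncomputable def aD (n : ℕ) : MvPolynomial (Fin n) ℚ :=
  ∑ π : Equiv.Perm (Fin n), monomial (dl n π) ((Equiv.Perm.sign π : ℤ) : ℚ)

open MvPolynomial in
theorem rename_aD (n : ℕ) (τ : Equiv.Perm (Fin n)) :
    rename τ (aD n) = C ((Equiv.Perm.sign τ : ℤ) : ℚ) * aD n := by
  rw [aD, map_sum, Finset.mul_sum]
  refine Fintype.sum_equiv (Equiv.mulRight τ⁻¹) _ _ ?_
  intro π
  rw [rename_monomial, C_mul_monomial]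
  have e1 : Finsupp.mapDomain τ (dl n π) = dl n (Equiv.mulRight τ⁻¹ π) := by
    ext i
    rw [Finsupp.mapDomain_equiv_apply]
    rfl
  rw [e1]
  congr 1
  · simp only [Equiv.coe_mulRight, Equiv.Perm.sign_mul, Equiv.Perm.sign_inv]
    rcases Int.units_eq_one_or (Equiv.Perm.sign τ) with h | h <;> simp [h]

open MvPolynomial in
theorem anti_coeff {n : ℕ} (g : MvPolynomial (Fin n) ℚ) (hg : g.IsSymmetric) :
    Anti (fun γ => coeff γ (aD n * g)) := by
  intro σ γ γ' h
  have e : γ' = γ.mapDomain (σ⁻¹ : Equiv.Perm (Fin n)) := by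
    ext i
    rw [Finsupp.mapDomain_equiv_apply, h]
    rfl
  have h1 := coeff_rename_mapDomain (σ⁻¹ : Equiv.Perm (Fin n)) (Equiv.injective _) (aD n * g) γ
  rw [← e, map_mul, rename_aD, hg, mul_assoc, coeff_C_mul, Equiv.Perm.sign_inv] at h1
  simp only
  rw [← h1]
  rcases Int.units_eq_one_or (Equiv.Perm.sign σ) with h | h <;> simp [h]

theorem sum_dl (n : ℕ) (π : Equiv.Perm (Fin n)) :
    ∑ i, dl n π i = ∑ i : Fin n, (n - 1 - (i : ℕ)) := by
  simp only [dl_apply]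
  exact Equiv.sum_comp π (fun i : Fin n => n - 1 - (i : ℕ))

open MvPolynomial in
theorem coeff_aD (n : ℕ) (P : Partition) (hP : ∀ r, n ≤ r → P.parts r = 0) [Decidable (P = Partition.empty)] :
    coeff (al n P) (aD n) = if P = Partition.empty then 1 else 0 := by
  rw [aD, coeff_sum]
  simp only [coeff_monomial]
  split_ifs with h
  · rw [Finset.sum_eq_single 1]
    · rw [if_pos]
      · simp
      · ext i
        simp [h, Partition.empty]
    · intro π _ hπ
      rw [if_neg]
      intro e
      apply hπ
      ext i
      have := DFunLike.congr_fun e i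
      simp [h, Partition.empty] at this
      have a := (π i).2
      have b := i.2
      simp
      omega
    · simp
  · apply Finset.sum_eq_zero
    intro π _
    rw [if_neg]
    intro e
    apply h
    have h1 := sum_dl n π
    rw [e] at h1
    simp only [al_apply, Finset.sum_add_distrib] at h1
    have h2 : ∑ i : Fin n, P.parts i = 0 := by omega
    rw [Finset.sum_eq_zero_iff] at h2
    apply Partition.ext'
    intro r
    rcases Nat.lt_or_ge r n with hr | hr
    · exact h2 ⟨r, hr⟩ (Finset.mem_univ _)
    · exact hP r hr

open MvPolynomial in
theorem isSymmetric_prod_psum (n : ℕ) {l : ℕ} (ν : Fin l → ℕ) :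
    (∏ j, psum (Fin n) ℚ (ν j)).IsSymmetric := by
  intro e
  rw [map_prod]
  exact Finset.prod_congr rfl fun j _ => psum_isSymmetric _ _ _ e

open MvPolynomial in
theorem chiF_eq (n : ℕ) (l : ℕ) : ∀ (ν : Fin l → ℕ) (_ : ∀ j, 0 < ν j) (P : Partition)
    (_ : ∀ r, n ≤ r → P.parts r = 0),
    chiF l ν P = coeff (al n P) (aD n * ∏ j, psum (Fin n) ℚ (ν j)) := by
  classical
  induction l with
  | zero =>
    intro ν _ P hP
    simp only [Finset.univ_eq_empty, Finset.prod_empty, mul_one]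
    rw [coeff_aD n P hP, chiF]
    split_ifs with h
    · let c0 : Chain 0 ν P := ⟨fun _ => Partition.empty, rfl, h.symm, fun j => j.elim0⟩
      have : Unique (Chain 0 ν P) := ⟨⟨c0⟩, fun a => Subtype.ext (funext fun j => by
        rw [Fin.fin_one_eq_zero j, a.2.1]; rfl)⟩
      rw [finsum_unique]
      simp [Chain.height]
    · have : IsEmpty (Chain 0 ν P) := ⟨fun c => h (c.2.2.1.symm.trans c.2.1)⟩
      exact finsum_of_isEmpty _
  | succ l ih =>
    intro ν hν P hP
    have := finite_steps P (hν (Fin.last l))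
    have := Fintype.ofFinite {Q // IsStep P Q (ν (Fin.last l))}
    rw [chiF_succ l ν hν, Fin.prod_univ_castSucc, ← mul_assoc, coeff_mul_psum]
    rw [← step_sum n hP (hν (Fin.last l))
      (anti_coeff _ (isSymmetric_prod_psum n (fun j : Fin l => ν j.castSucc)))]
    refine Finset.sum_congr rfl fun Q _ => ?_
    rw [ih _ (fun j => hν _)]
    intro r hr
    obtain ⟨i, m, h⟩ := exists_bead_of_isStep (hν _) Q.2
    have := h.le r
    have := hP r hr
    omega

open MvPolynomial in
theorem chi_eq (n : ℕ) (P : Partition) (hP : ∀ r, n ≤ r → P.parts r = 0) (μ : Multiset ℕ)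
    (hμ : ∀ x ∈ μ, 0 < x) :
    (chi P μ : ℚ) = coeff (al n P) (aD n * (μ.map (psum (Fin n) ℚ)).prod) := by
  have hl : ((typeList μ : List ℕ) : Multiset ℕ) = μ := by
    rw [typeList, Multiset.coe_reverse, Multiset.sort_eq]
  rw [chi, chiAux_eq, chiF_eq n _ _ _ P hP]
  · congr 2
    conv_rhs => rw [← hl]
    rw [Multiset.map_coe, Multiset.prod_coe, ← List.prod_ofFn]
    congr 1
    conv_rhs => rw [← List.ofFn_get (typeList μ), List.map_ofFn]
    rfl
  · intro j
    have hmem : ∀ x, x ∈ typeList μ → x ∈ μ := fun x hx => by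
      rw [← hl]; exact Multiset.mem_coe.2 hx
    exact hμ _ (hmem _ (List.get_mem _ _))

theorem zpart_cons (a : ℕ) (ν : Multiset ℕ) :
    zpart (a ::ₘ ν) = a * (ν.count a + 1) * zpart ν := by
  rw [zpart, zpart, Multiset.prod_cons]
  have h1 : ∏ j ∈ ν.toFinset, (ν.count j).factorial =
      ∏ j ∈ (a ::ₘ ν).toFinset, (ν.count j).factorial := by
    apply Finset.prod_subset
    · intro x hx
      simp at hx ⊢; exact Or.inr hx
    · intro x _ hx
      simp at hx
      simp [Multiset.count_eq_zero_of_notMem hx]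
  rw [h1]
  have ha : a ∈ (a ::ₘ ν).toFinset := by simp
  rw [← Finset.mul_prod_erase _ _ ha, ← Finset.mul_prod_erase _ _ ha]
  have h2 : ∏ x ∈ (a ::ₘ ν).toFinset.erase a, ((a ::ₘ ν).count x).factorial =
      ∏ x ∈ (a ::ₘ ν).toFinset.erase a, (ν.count x).factorial := by
    apply Finset.prod_congr rfl
    intro x hx
    rw [Multiset.count_cons_of_ne (Finset.ne_of_mem_erase hx)]
  rw [h2, Multiset.count_cons_self, Nat.factorial_succ]
  ring

noncomputable def Zs {R : Type*} [CommRing R] [Algebra ℚ R] (g : ℕ → R) (p : ℕ) : R :=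
  ∑ μ : Nat.Partition p, (1 / (zpart μ.parts : ℚ)) • (μ.parts.map g).prod

theorem part_sum_eq {p : ℕ} (μ : Nat.Partition p) :
    p = ∑ j ∈ Finset.Icc 1 p, j * μ.parts.count j := by
  conv_lhs => rw [← μ.parts_sum, Finset.sum_multiset_count]
  simp only [smul_eq_mul, mul_comm]
  apply Finset.sum_subset
  · intro x hx
    rw [Multiset.mem_toFinset] at hx
    rw [Finset.mem_Icc]
    exact ⟨μ.parts_pos hx, Nat.Partition.le_of_mem_parts hx⟩
  · intro x _ hx
    rw [Multiset.mem_toFinset] at hx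
    simp [Multiset.count_eq_zero_of_notMem hx]

theorem Zs_rec {R : Type*} [CommRing R] [Algebra ℚ R] (g : ℕ → R) (p : ℕ) :
    (p : ℚ) • Zs g p = ∑ j ∈ Finset.Icc 1 p, g j * Zs g (p - j) := by
  classical
  have h1 : (p : ℚ) • Zs g p = ∑ μ : Nat.Partition p, ∑ j ∈ Finset.Icc 1 p,
      ((j * μ.parts.count j : ℚ) / (zpart μ.parts : ℚ)) • (μ.parts.map g).prod := by
    rw [Zs, Finset.smul_sum]
    refine Finset.sum_congr rfl fun μ _ => ?_
    rw [← Finset.sum_smul, smul_smul, ← Finset.sum_div]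
    congr 1
    have := congrArg (Nat.cast : ℕ → ℚ) (part_sum_eq μ)
    push_cast at this
    rw [← this]
    ring
  rw [h1, Finset.sum_comm]
  refine Finset.sum_congr rfl fun j hj => ?_
  rw [Finset.mem_Icc] at hj
  rw [← Finset.sum_subset (Finset.filter_subset (fun μ : Nat.Partition p => j ∈ μ.parts) Finset.univ)]
  · rw [Finset.sum_subtype (p := fun μ : Nat.Partition p => j ∈ μ.parts) _ (by simp)]
    rw [← (Nat.Partition.partitionWithPartEquiv hj.1 hj.2).symm.sum_comp, Zs, Finset.mul_sum]
    refine Finset.sum_congr rfl fun ν _ => ?_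
    rw [Nat.Partition.partitionWithPartEquiv_symm_apply_parts, Multiset.map_cons,
      Multiset.prod_cons, zpart_cons, Multiset.count_cons_self, mul_smul_comm]
    congr 1
    have : (j : ℚ) ≠ 0 := by have := hj.1; positivity
    have h3 : ((ν.parts.count j : ℚ) + 1) ≠ 0 := by positivity
    push_cast
    rw [div_mul_eq_div_div, div_self (mul_ne_zero this h3)]
  · intro μ _ hμ
    simp at hμ
    simp [Multiset.count_eq_zero_of_notMem hμ]

open MvPolynomial in
noncomputable def Hs (n k p : ℕ) : MvPolynomial (Fin n) ℚ :=
  ∑ β ∈ Finset.finsuppAntidiag (Finset.univ : Finset (Fin n)) p, monomial (k • β) 1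

open MvPolynomial in
theorem Hs_rec (n k p : ℕ) :
    (p : ℚ) • Hs n k p = ∑ j ∈ Finset.Icc 1 p, psum (Fin n) ℚ (k * j) * Hs n k (p - j) := by
  classical
  have h1 : (p : ℚ) • Hs n k p = ∑ β ∈ Finset.finsuppAntidiag (Finset.univ : Finset (Fin n)) p,
      ∑ j ∈ Finset.Icc 1 p, ∑ i : Fin n, if j ≤ β i then monomial (k • β) (1 : ℚ) else 0 := by
    rw [Hs, Finset.smul_sum]
    refine Finset.sum_congr rfl fun β hβ => ?_
    rw [Finset.sum_comm]
    have hs : ∑ i, β i = p := (Finset.mem_finsuppAntidiag.1 hβ).1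
    have : ∀ i, (∑ j ∈ Finset.Icc 1 p, if j ≤ β i then monomial (k • β) (1 : ℚ) else 0) =
        (β i : ℚ) • monomial (k • β) (1 : ℚ) := by
      intro i
      have hle : β i ≤ p := by
        rw [← hs]; exact Finset.single_le_sum (fun _ _ => Nat.zero_le _) (Finset.mem_univ i)
      rw [← Finset.sum_filter, Finset.sum_const]
      have : Finset.filter (fun j => j ≤ β i) (Finset.Icc 1 p) = Finset.Icc 1 (β i) := by
        ext j; simp; omega
      rw [this, Nat.card_Icc, Nat.add_sub_cancel, Nat.cast_smul_eq_nsmul]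
    simp only [this]
    rw [← Finset.sum_smul, ← hs]
    push_cast
    rfl
  rw [h1, Finset.sum_comm]
  refine Finset.sum_congr rfl fun j hj => ?_
  rw [Finset.mem_Icc] at hj
  rw [Finset.sum_comm, psum, Finset.sum_mul]
  refine Finset.sum_congr rfl fun i _ => ?_
  rw [Hs, Finset.mul_sum, ← Finset.sum_filter]
  refine Finset.sum_nbij' (fun β => β - Finsupp.single i j) (fun β => β + Finsupp.single i j)
    ?_ ?_ ?_ ?_ ?_
  · intro β hβ
    simp only [Finset.mem_filter, Finset.mem_finsuppAntidiag] at hβ ⊢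
    refine ⟨?_, Finset.subset_univ _⟩
    have e : β = (β - Finsupp.single i j) + Finsupp.single i j :=
      (tsub_add_cancel_of_le (Finsupp.single_le_iff.2 hβ.2)).symm
    have h2 : ∑ x, β x = p := hβ.1.1
    change ∑ x, (β - Finsupp.single i j) x = p - j
    rw [e] at h2
    simp only [Finsupp.add_apply, Finset.sum_add_distrib] at h2
    rw [Finset.sum_eq_single (a := i) (f := fun x => (Finsupp.single i j) x)] at h2
    · rw [Finsupp.single_eq_same] at h2
      omega
    · intro b _ hb
      exact Finsupp.single_eq_of_ne hb
    · simp
  · intro β hβ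
    simp only [Finset.mem_filter, Finset.mem_finsuppAntidiag] at hβ ⊢
    refine ⟨⟨?_, Finset.subset_univ _⟩, by simp⟩
    change ∑ x, (β + Finsupp.single i j) x = p
    have h2 : ∑ x, β x = p - j := hβ.1
    simp only [Finsupp.add_apply, Finset.sum_add_distrib]
    rw [h2, Finset.sum_eq_single (a := i)]
    · rw [Finsupp.single_eq_same]
      omega
    · intro b _ hb
      exact Finsupp.single_eq_of_ne hb
    · simp
  · intro β hβ
    simp only [Finset.mem_filter] at hβ
    exact tsub_add_cancel_of_le (Finsupp.single_le_iff.2 hβ.2)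
  · intro β _
    simp
  · intro β hβ
    simp only [Finset.mem_filter] at hβ
    rw [X_pow_eq_monomial, monomial_mul, one_mul]
    congr 1
    conv_lhs => rw [← tsub_add_cancel_of_le (Finsupp.single_le_iff.2 hβ.2)]
    rw [smul_add, add_comm, Finsupp.smul_single, smul_eq_mul]

open MvPolynomial in
theorem Zs_eq_Hs (n k p : ℕ) : Zs (fun j => psum (Fin n) ℚ (k * j)) p = Hs n k p := by
  induction p using Nat.strong_induction_on with
  | _ p ih =>
    rcases Nat.eq_zero_or_pos p with rfl | hp
    · simp [Zs, Hs, zpart]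
    · have hp' : (p : ℚ) ≠ 0 := by positivity
      have : (p : ℚ) • Zs (fun j => psum (Fin n) ℚ (k * j)) p = (p : ℚ) • Hs n k p := by
        rw [Zs_rec, Hs_rec]
        refine Finset.sum_congr rfl fun j hj => ?_
        rw [Finset.mem_Icc] at hj
        rw [ih (p - j) (by omega)]
      exact smul_right_injective _ hp' this

/-! ### Part 4 -/

def Mt (n k : ℕ) (P : Partition) : Matrix (Fin n) (Fin n) ℚ :=
  Matrix.of fun i j => if n - 1 - (j : ℕ) ≤ P.parts i + (n - 1 - i) ∧
    k ∣ (P.parts i + (n - 1 - i)) - (n - 1 - (j : ℕ)) then 1 else 0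

theorem size_eq (n : ℕ) (P : Partition) (hP : ∀ r, n ≤ r → P.parts r = 0) :
    ∑ i : Fin n, P.parts i = P.size := by
  rw [Partition.size, finsum_eq_sum_of_support_subset (s := Finset.range n)]
  · exact Fin.sum_univ_eq_sum_range (fun i => P.parts i) n
  · intro r hr
    simp only [Function.mem_support] at hr
    simp only [Finset.coe_range, Set.mem_Iio]
    by_contra hc
    exact hr (hP r (by omega))

open MvPolynomial in
theorem coeff_aD_Hs (n k p : ℕ) (hk : 0 < k) (P : Partition) (hP : ∀ r, n ≤ r → P.parts r = 0)
    (hs : P.size = k * p) :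
    coeff (al n P) (aD n * Hs n k p) = (Mt n k P).det := by
  classical
  rw [← Matrix.det_transpose, Matrix.det_apply', aD, Finset.sum_mul, coeff_sum]
  refine Finset.sum_congr rfl fun π _ => ?_
  rw [Hs, Finset.mul_sum, coeff_sum]
  simp only [monomial_mul, coeff_monomial, mul_one]
  have hprod : ∏ i, (Mt n k P).transpose (π i) i =
      if ∀ i : Fin n, n - 1 - (π i : ℕ) ≤ P.parts i + (n - 1 - i) ∧
        k ∣ (P.parts i + (n - 1 - i)) - (n - 1 - (π i : ℕ)) then 1 else 0 := by
    simp only [Matrix.transpose_apply, Mt, Matrix.of_apply]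
    rw [Finset.prod_boole]
    simp
  rw [hprod]
  split_ifs with h
  · let β0 : Fin n →₀ ℕ := Finsupp.equivFunOnFinite.symm fun i =>
      ((P.parts i + (n - 1 - i)) - (n - 1 - (π i : ℕ))) / k
    have hb : ∀ i, k * β0 i = (P.parts i + (n - 1 - i)) - (n - 1 - (π i : ℕ)) := fun i =>
      Nat.mul_div_cancel' (h i).2
    rw [Finset.sum_eq_single β0]
    · rw [if_pos, mul_one]
      ext i
      have := (h i).1
      have := hb i
      simp only [Finsupp.add_apply, Finsupp.smul_apply, smul_eq_mul, dl_apply, al_apply]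
      omega
    · intro β _ hne
      rw [if_neg]
      intro e
      apply hne
      ext i
      have e1 := DFunLike.congr_fun e i
      simp only [Finsupp.add_apply, Finsupp.smul_apply, smul_eq_mul, dl_apply, al_apply] at e1
      have := hb i
      apply Nat.eq_of_mul_eq_mul_left hk
      omega
    · intro hnot
      exfalso
      apply hnot
      rw [Finset.mem_finsuppAntidiag]
      refine ⟨?_, Finset.subset_univ _⟩
      change ∑ i, β0 i = p
      apply Nat.eq_of_mul_eq_mul_left hk
      rw [Finset.mul_sum, ← hs, ← size_eq n P hP]
      have h1 := sum_dl n π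
      have h2 : ∑ i, (k * β0 i + dl n π i) = ∑ i : Fin n, (P.parts i + (n - 1 - i)) := by
        refine Finset.sum_congr rfl fun i _ => ?_
        have := (h i).1
        rw [hb i, dl_apply]
        omega
      rw [Finset.sum_add_distrib, Finset.sum_add_distrib, h1] at h2
      omega
  · rw [mul_zero]
    apply Finset.sum_eq_zero
    intro β _
    rw [if_neg]
    intro e
    apply h
    intro i
    have e1 := DFunLike.congr_fun e i
    simp only [Finsupp.add_apply, Finsupp.smul_apply, smul_eq_mul, dl_apply, al_apply] at e1
    refine ⟨by omega, ⟨β i, by omega⟩⟩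

open MvPolynomial in
theorem eps_eq_det (n k p : ℕ) (hk : 0 < k) (P : Partition) (hP : ∀ r, n ≤ r → P.parts r = 0)
    (hs : P.size = k * p) :
    (∑ μ : Nat.Partition p, (1 / (zpart μ.parts : ℚ)) *
        (chi P (μ.parts.map fun x => k * x) : ℚ)) = (Mt n k P).det := by
  rw [← coeff_aD_Hs n k p hk P hP hs, ← Zs_eq_Hs, Zs, Finset.mul_sum, coeff_sum]
  refine Finset.sum_congr rfl fun μ _ => ?_
  rw [mul_smul_comm, coeff_smul, smul_eq_mul, chi_eq n P hP, Multiset.map_map]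
  · rfl
  · intro x hx
    rw [Multiset.mem_map] at hx
    obtain ⟨y, hy, rfl⟩ := hx
    exact Nat.mul_pos hk (μ.parts_pos hy)

theorem det_zero_of_long (k : ℕ) (hk : 0 < k) (P : Partition)
    (h : ¬ ∀ i : ℕ, k ≤ i → P.parts i = 0) :
    ∃ n, (∀ r, n ≤ r → P.parts r = 0) ∧ (Mt n k P).det = 0 := by
  classical
  let n := Nat.find P.eventually_zero
  have hn : ∀ r, n ≤ r → P.parts r = 0 := Nat.find_spec P.eventually_zero
  have hkn : k < n := by
    by_contra hc
    exact h fun i hi => hn i (by omega)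
  have hpos : ∀ i, i < n → 0 < P.parts i := by
    intro i hi
    by_contra hc
    refine Nat.find_min P.eventually_zero hi ?_
    intro r hr
    have := P.antitone hr
    omega
  refine ⟨n, hn, ?_⟩
  apply Matrix.det_zero_of_column_eq (i := ⟨n - 1, by omega⟩) (j := ⟨n - 1 - k, by omega⟩)
  · intro e
    have := congrArg Fin.val e
    simp only at this
    omega
  · intro i
    have hi := hpos i i.2
    simp only [Mt, Matrix.of_apply]
    have e1 : n - 1 - (n - 1) = 0 := by omega
    have e2 : n - 1 - (n - 1 - k) = k := by omega
    rw [e1, e2]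
    congr 1
    simp only [Nat.zero_le, true_and, Nat.sub_zero, eq_iff_iff]
    constructor
    · intro hd
      exact ⟨Nat.le_of_dvd (by omega) hd, Nat.dvd_sub hd (dvd_refl k)⟩
    · rintro ⟨h1, h2⟩
      have := (Nat.dvd_add_right (dvd_refl k)).2 h2
      rwa [Nat.add_sub_cancel' h1] at this

theorem Mt_k (k : ℕ) (P : Partition) (i j : Fin k) : Mt k k P i j =
    if (((P.parts (i : ℕ) : ℤ) + (k : ℤ) - 1 - ((i : ℕ) : ℤ) : ℤ) : ZMod k) =
      (((k : ℤ) - 1 - ((j : ℕ) : ℤ) : ℤ) : ZMod k) then 1 else 0 := by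
  have hi := i.2
  have hj := j.2
  simp only [Mt, Matrix.of_apply]
  congr 1
  rw [eq_iff_iff, eq_comm (a := (((P.parts (i : ℕ) : ℤ) + (k : ℤ) - 1 - ((i : ℕ) : ℤ) : ℤ) : ZMod k)),
    ZMod.intCast_eq_intCast_iff_dvd_sub]
  have ea : ((P.parts (i : ℕ) : ℤ) + (k : ℤ) - 1 - ((i : ℕ) : ℤ)) =
    ((P.parts i + (k - 1 - i) : ℕ) : ℤ) := by omega
  have eb : ((k : ℤ) - 1 - ((j : ℕ) : ℤ)) = ((k - 1 - (j : ℕ) : ℕ) : ℤ) := by omega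
  rw [ea, eb]
  have hb : k - 1 - (j : ℕ) < k := by omega
  generalize P.parts i + (k - 1 - i) = a
  generalize k - 1 - (j : ℕ) = b at hb
  constructor
  · rintro ⟨h1, h2⟩
    rw [← Nat.cast_sub h1]
    exact_mod_cast h2
  · intro h
    have h1 : b ≤ a := by
      by_contra hc
      obtain ⟨c, hc'⟩ := h
      have : c < 0 := by
        by_contra h0
        have : (0 : ℤ) ≤ k * c := mul_nonneg (by omega) (by omega)
        omega
      have : (k : ℤ) * c ≤ k * (-1) := by
        apply mul_le_mul_of_nonneg_left <;> omega
      omega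
    rw [← Nat.cast_sub h1] at h
    exact ⟨h1, by exact_mod_cast h⟩

theorem c_inj (k : ℕ) : Function.Injective fun j : Fin k =>
    (((k : ℤ) - 1 - ((j : ℕ) : ℤ) : ℤ) : ZMod k) := by
  intro i j h
  have hi := i.2
  have hj := j.2
  simp only at h
  rw [ZMod.intCast_eq_intCast_iff] at h
  have h2 := h.eq
  rw [Int.emod_eq_of_lt (by omega) (by omega), Int.emod_eq_of_lt (by omega) (by omega)] at h2
  apply Fin.ext
  omega

theorem det_value (k : ℕ) (P : Partition) (τ : Equiv.Perm (Fin k))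
    (h : ∀ i : Fin k,
        (((P.parts ((τ i : ℕ)) : ℤ) + (k : ℤ) - 1 - ((τ i : ℕ) : ℤ) : ℤ) : ZMod k) =
          (((k : ℤ) - 1 - ((i : ℕ) : ℤ) : ℤ) : ZMod k)) :
    (Mt k k P).det = ((Equiv.Perm.sign τ : ℤ) : ℚ) := by
  have h1 : (Mt k k P).submatrix τ id = 1 := by
    ext i j
    rw [Matrix.submatrix_apply, Mt_k, h i, id, Matrix.one_apply]
    congr 1
    exact propext ⟨fun e => c_inj k e, fun e => by rw [e]⟩
  have h2 := Matrix.det_permute τ (Mt k k P)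
  rw [h1, Matrix.det_one] at h2
  rcases Int.units_eq_one_or (Equiv.Perm.sign τ) with h | h
  · simp [h] at h2 ⊢; linarith
  · simp [h] at h2 ⊢; linarith

/-- for `λ ⊢ kp` set `ε₁(λ) := Σ_{μ ⊢ p} (1/z_μ)·χ^λ_{kμ}`.
Then `ε₁(λ) ≠ 0` iff `λ` has at most `k` nonzero parts and the numbers
`λᵢ + k − i` (`1 ≤ i ≤ k`) have `k` distinct residues mod `k`; in that case
`ε₁(λ)` is the sign of the (unique) `τ ∈ S_k` with
`λ_{τ(i)} + k − τ(i) ≡ k − i (mod k)` for all `i`. (Here parts are 0-indexed: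
`λᵢ = P.parts (i−1)`.) -/
theorem eps1_ne_zero_iff_and_value (k p : ℕ) (hk : 2 ≤ k) (P : Partition)
    (hP : P.size = k * p) :
    ((∑ μ : Nat.Partition p, (1 / (zpart μ.parts : ℚ)) *
        (chi P (μ.parts.map fun x => k * x) : ℚ)) ≠ 0 ↔
      (∀ i : ℕ, k ≤ i → P.parts i = 0) ∧
        Function.Injective fun i : Fin k =>
          (((P.parts (i : ℕ) : ℤ) + (k : ℤ) - 1 - ((i : ℕ) : ℤ) : ℤ) : ZMod k)) ∧
    (∀ τ : Equiv.Perm (Fin k),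
      (∀ i : ℕ, k ≤ i → P.parts i = 0) →
      (∀ i : Fin k,
        (((P.parts ((τ i : ℕ)) : ℤ) + (k : ℤ) - 1 - ((τ i : ℕ) : ℤ) : ℤ) : ZMod k) =
          (((k : ℤ) - 1 - ((i : ℕ) : ℤ) : ℤ) : ZMod k)) →
      (∑ μ : Nat.Partition p, (1 / (zpart μ.parts : ℚ)) *
          (chi P (μ.parts.map fun x => k * x) : ℚ)) =
        ((Equiv.Perm.sign τ : ℤ) : ℚ)) := by
  have hk0 : 0 < k := by omega
  have : NeZero k := ⟨by omega⟩
  refine ⟨⟨?_, ?_⟩, ?_⟩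
  · intro hne
    have h1 : ∀ i : ℕ, k ≤ i → P.parts i = 0 := by
      by_contra hc
      obtain ⟨n, hn, hd⟩ := det_zero_of_long k hk0 P hc
      exact hne (by rw [eps_eq_det n k p hk0 P hn hP, hd])
    refine ⟨h1, ?_⟩
    rw [eps_eq_det k k p hk0 P h1 hP] at hne
    intro i j hij
    by_contra hc
    apply hne
    apply Matrix.det_zero_of_row_eq hc
    funext l
    simp only at hij
    rw [Mt_k, Mt_k, hij]
  · rintro ⟨h1, h2⟩
    rw [eps_eq_det k k p hk0 P h1 hP]
    have hcard : Fintype.card (Fin k) = Fintype.card (ZMod k) := by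
      rw [ZMod.card, Fintype.card_fin]
    let r := Equiv.ofBijective _ ((Fintype.bijective_iff_injective_and_card _).2 ⟨h2, hcard⟩)
    let c := Equiv.ofBijective _ ((Fintype.bijective_iff_injective_and_card _).2 ⟨c_inj k, hcard⟩)
    have := det_value k P (c.trans r.symm) (fun i => r.apply_symm_apply (c i))
    rw [this]
    simp
  · intro τ h1 h2
    rw [eps_eq_det k k p hk0 P h1 hP]
    exact det_value k P τ h2

end RimHookPaper
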